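/- For every integer d ≥ 3, the ideal I = I_3(H) of ℂ[m_0,…,m_d] generated by the 3×3 minors of the matrix H is a prime ideal. -/

import Mathlib

open MvPolynomial

/-- The `3 × d` matrix `H` of the inverse Gaussian moment variety: its first column is
`(m₀², 0, m₁²)ᵀ`, and its `c`-th column, for `2 ≤ c ≤ d`, is
`(m_{c-2}, (2c-3)·m_{c-1}, m_c)ᵀ`.  Columns are indexed by `Fin d`, with `c : Fin d`
corresponding to the paper's column `c + 1`. -/
noncomputable def invGaussMatrix (d : ℕ) :
    Matrix (Fin 3) (Fin d) (MvPolynomial (Fin (d + 1)) ℂ) :=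
  Matrix.of fun r c =>
    if c.val = 0 then
      ![X ⟨0, by omega⟩ ^ 2, 0, X ⟨1, by have := c.isLt; omega⟩ ^ 2] r
    else
      ![X ⟨c.val - 1, by have := c.isLt; omega⟩,
        C (2 * (c.val : ℂ) - 1) * X ⟨c.val, by have := c.isLt; omega⟩,
        X ⟨c.val + 1, by have := c.isLt; omega⟩] r

/-- The ideal `I₃(H)` generated by all `3 × 3` minors of `H`, i.e. determinants of
submatrices obtained by choosing `3` of the `d` columns. -/
noncomputable def invGaussIdeal (d : ℕ) : Ideal (MvPolynomial (Fin (d + 1)) ℂ) :=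
  Ideal.span
    { p | ∃ s : Fin 3 → Fin d, StrictMono s ∧ p = ((invGaussMatrix d).submatrix id s).det }

namespace InvGauss

noncomputable section

/-- The ambient ring with `d = n + 3`. -/
abbrev S (n : ℕ) := MvPolynomial (Fin (n + 3 + 1)) ℂ

/-- Coefficient ring: polynomials in `m₀, m_{d-1}, m_d`. -/
abbrev A := MvPolynomial (Fin 3) ℂ

def x (n : ℕ) (i : ℕ) : S n := if h : i < n + 3 + 1 then X ⟨i, h⟩ else 0

def emb (n : ℕ) : A →ₐ[ℂ] S n := aeval ![x n 0, x n (n + 2), x n (n + 3)]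

def u (n : ℕ) (i : ℕ) : S n := if i = 0 then 1 else x n (i + 1)
def u' (n : ℕ) (i : ℕ) : S n := if i = 0 then 1 else x n i

def b (n : ℕ) (p : Fin (n + 2) × Fin (n + 2)) : S n :=
  if p.1.val = n + 1 then x n 1 ^ 2 * u' n p.2.val
  else if p.2.val ≤ p.1.val then u n p.1.val * u n p.2.val
  else u n p.1.val * u n (p.2.val - 1) * x n 1

/-- Elements congruent mod `I` to `A`-combinations of the standard monomials. -/
def T (n : ℕ) : Submodule ℂ (S n) where
  carrier := {F | ∃ c : Fin (n + 2) × Fin (n + 2) → A,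
    F - ∑ p, emb n (c p) * b n p ∈ invGaussIdeal (n + 3)}
  zero_mem' := ⟨0, by simp⟩
  add_mem' := by
    rintro F G ⟨c, hc⟩ ⟨e, he⟩
    refine ⟨c + e, ?_⟩
    have := Ideal.add_mem _ hc he
    convert this using 1
    simp only [Pi.add_apply, map_add, add_mul, Finset.sum_add_distrib]
    ring
  smul_mem' := by
    rintro r F ⟨c, hc⟩
    refine ⟨fun p => C r * c p, ?_⟩
    have := Ideal.mul_mem_left _ (C r) hc
    convert this using 1
    rw [mul_sub, Finset.mul_sum, MvPolynomial.smul_eq_C_mul]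
    congr 1
    refine Finset.sum_congr rfl fun p _ => ?_
    rw [map_mul, mul_assoc]
    congr 1
    exact (emb n).commutes r

lemma T_mul {n : ℕ} (g : A) {F : S n} (hF : F ∈ T n) : emb n g * F ∈ T n := by
  obtain ⟨c, hc⟩ := hF
  refine ⟨fun p => g * c p, ?_⟩
  have e : emb n g * F - ∑ p, emb n (g * c p) * b n p
      = emb n g * (F - ∑ p, emb n (c p) * b n p) := by
    rw [mul_sub, Finset.mul_sum]
    simp only [map_mul, mul_assoc]
  rw [e]
  exact Ideal.mul_mem_left _ _ hc

lemma T_b {n : ℕ} (p) : b n p ∈ T n := by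
  classical
  refine ⟨fun q => if q = p then 1 else 0, ?_⟩
  have : ∑ q, emb n (if q = p then 1 else 0) * b n q = b n p := by
    rw [Finset.sum_eq_single p]
    · simp
    · intro q _ h; simp [h]
    · simp
  rw [this]; simp

lemma T_I {n : ℕ} {F : S n} (hF : F ∈ invGaussIdeal (n + 3)) : F ∈ T n :=
  ⟨0, by simpa using hF⟩

lemma T_u {n : ℕ} {i j : ℕ} (hi : i ≤ n) (hj : j ≤ n) : u n i * u n j ∈ T n := by
  wlog h : j ≤ i generalizing i j
  · rw [mul_comm]; exact this hj hi (by omega)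
  have := T_b (n := n) (⟨i, by omega⟩, ⟨j, by omega⟩)
  simpa [b, h, show i ≠ n + 1 by omega] using this

lemma T_u1 {n : ℕ} {i j : ℕ} (hi : i ≤ n) (hj : j ≤ n) : u n i * u n j * x n 1 ∈ T n := by
  wlog h : i ≤ j generalizing i j
  · rw [mul_comm (u n i)]; exact this hj hi (by omega)
  have := T_b (n := n) (⟨i, by omega⟩, ⟨j + 1, by omega⟩)
  simpa [b, show i ≠ n + 1 by omega, show ¬ (j + 1 ≤ i) by omega] using this

lemma T_u' {n : ℕ} {j : ℕ} (hj : j ≤ n + 1) : x n 1 ^ 2 * u' n j ∈ T n := by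
  have := T_b (n := n) (⟨n + 1, by omega⟩, ⟨j, by omega⟩)
  simpa [b] using this

lemma minor3 {n i j k : ℕ} (hi : 1 ≤ i) (hij : i < j) (hjk : j < k) (hk : k ≤ n + 2) :
    Matrix.det !![x n (i-1), x n (j-1), x n (k-1);
      C (2 * (i:ℂ) - 1) * x n i, C (2 * (j:ℂ) - 1) * x n j, C (2 * (k:ℂ) - 1) * x n k;
      x n (i+1), x n (j+1), x n (k+1)] ∈ invGaussIdeal (n + 3) := by
  apply Ideal.subset_span
  refine ⟨![⟨i, by omega⟩, ⟨j, by omega⟩, ⟨k, by omega⟩], ?_, ?_⟩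
  · rw [Fin.strictMono_iff_lt_succ]
    intro q; fin_cases q <;> simp [Fin.lt_def] <;> omega
  · congr 1
    ext r c : 2
    fin_cases r <;> fin_cases c <;>
    simp [invGaussMatrix, x] <;> split_ifs <;> first | omega | rfl

lemma minor2 {n j k : ℕ} (hj : 1 ≤ j) (hjk : j < k) (hk : k ≤ n + 2) :
    Matrix.det !![x n 0 ^ 2, x n (j-1), x n (k-1);
      0, C (2 * (j:ℂ) - 1) * x n j, C (2 * (k:ℂ) - 1) * x n k;
      x n 1 ^ 2, x n (j+1), x n (k+1)] ∈ invGaussIdeal (n + 3) := by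
  apply Ideal.subset_span
  refine ⟨![⟨0, by omega⟩, ⟨j, by omega⟩, ⟨k, by omega⟩], ?_, ?_⟩
  · rw [Fin.strictMono_iff_lt_succ]
    intro q; fin_cases q <;> simp [Fin.lt_def] <;> omega
  · congr 1
    ext r c : 2
    fin_cases r <;> fin_cases c <;>
    simp [invGaussMatrix, x] <;> split_ifs <;> first | omega | rfl

def pr (n : ℕ) (s : Multiset ℕ) : S n := (s.map (x n)).prod

def meas (n : ℕ) (s : Multiset ℕ) : ℕ := (s.map fun i => (n + 3) ^ 2 - i ^ 2).sum

lemma odd_ne (j : ℕ) : (2 * (j:ℂ) - 1) ≠ 0 := by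
  intro h
  have : (2 * (j:ℤ) - 1) = 0 := by exact_mod_cast h
  omega

lemma pr_zero {n : ℕ} {s : Multiset ℕ} {i : ℕ} (h : i ∈ s) (hi : n + 3 < i) : pr n s = 0 := by
  apply Multiset.prod_eq_zero
  rw [Multiset.mem_map]
  exact ⟨i, h, by simp [x]; omega⟩

lemma pr_add (n : ℕ) (s t : Multiset ℕ) : pr n (s + t) = pr n s * pr n t := by
  simp [pr]

lemma meas_add (n : ℕ) (s t : Multiset ℕ) : meas n (s + t) = meas n s + meas n t := by
  simp [meas]

lemma meas_cast {n i : ℕ} (h : i ≤ n + 3) :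
    (((n + 3) ^ 2 - i ^ 2 : ℕ) : ℤ) = (n + 3) ^ 2 - i ^ 2 := by
  rw [Nat.cast_sub (Nat.pow_le_pow_left h 2)]; push_cast; ring

lemma red3 {n : ℕ} (s : Multiset ℕ) {a b c : ℕ} (ha : 2 ≤ a) (hab : a ≤ b) (hbc : b ≤ c)
    (hc : c ≤ n + 1)
    (IH : ∀ t, meas n t < meas n ({a, b, c} + s) → pr n t ∈ T n) :
    pr n ({a, b, c} + s) ∈ T n := by
  obtain ⟨i, rfl⟩ : ∃ i, a = i + 2 := ⟨a - 2, by omega⟩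
  have key : ∀ p q r : ℕ, p ≤ n + 3 → q ≤ n + 3 → r ≤ n + 3 →
      ((i + 2 : ℤ) ^ 2 + b ^ 2 + c ^ 2 < p ^ 2 + q ^ 2 + r ^ 2) →
      x n p * x n q * x n r * pr n s ∈ T n := by
    intro p q r hp hq hr h
    have := IH ({p, q, r} + s) (by
      rw [meas_add, meas_add]
      apply Nat.add_lt_add_right
      zify
      simp only [meas, Multiset.insert_eq_cons, Multiset.map_cons, Multiset.map_singleton,
        Multiset.sum_cons, Multiset.sum_singleton, Nat.cast_add]
      rw [meas_cast hp, meas_cast hq, meas_cast hr, meas_cast (by omega), meas_cast (by omega),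
        meas_cast (by omega)]
      push_cast
      linarith)
    rw [pr_add] at this
    simpa [pr, mul_assoc] using this
  have hm := Ideal.mul_mem_left _ (pr n s)
    (minor3 (n := n) (i := i + 1) (j := b) (k := c + 1) (by omega) (by omega) (by omega) (by omega))
  have hm := T_I hm
  have e : pr n ({i + 2, b, c} + s) = (2 * (b:ℂ) - 1)⁻¹ • ((2 * (b:ℂ) - 1) • pr n ({i + 2, b, c} + s)) := by
    rw [smul_smul, inv_mul_cancel₀ (odd_ne b), one_smul]
  rw [e]
  apply Submodule.smul_mem
  zify at ha hab hbc hc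
  have hb0 : ((b - 1 : ℕ) : ℤ) = b - 1 := by omega
  have h1 := key i b (c+2) (by omega) (by omega) (by omega) (by push_cast; nlinarith)
  have h2 := key i (b+1) (c+1) (by omega) (by omega) (by omega) (by push_cast; nlinarith)
  have h3 := key (i+1) (b-1) (c+2) (by omega) (by omega) (by omega) (by push_cast [hb0]; nlinarith)
  have h4 := key (i+1) (b+1) c (by omega) (by omega) (by omega) (by push_cast; nlinarith)
  have h5 := key (i+2) (b-1) (c+1) (by omega) (by omega) (by omega) (by push_cast [hb0]; nlinarith)
  have h1 := (T n).smul_mem (2 * (b:ℂ) - 1) h1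
  have h2 := (T n).smul_mem (2 * ((c+1:ℕ):ℂ) - 1) h2
  have h3 := (T n).smul_mem (2 * ((i+1:ℕ):ℂ) - 1) h3
  have h4 := (T n).smul_mem (2 * ((i+1:ℕ):ℂ) - 1) h4
  have h5 := (T n).smul_mem (2 * ((c+1:ℕ):ℂ) - 1) h5
  have := (T n).add_mem (T n |>.sub_mem (T n |>.add_mem (T n |>.sub_mem (T n |>.sub_mem h1 h2) h3) h4) hm) h5
  convert this using 1
  rw [pr_add, Matrix.det_fin_three]
  simp only [pr, Multiset.insert_eq_cons, Multiset.map_cons, Multiset.map_singleton,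
        Multiset.prod_cons, Multiset.prod_singleton, MvPolynomial.smul_eq_C_mul]
  simp
  ring

lemma red2 {n : ℕ} (s : Multiset ℕ) {a b : ℕ} (ha : 1 ≤ a) (hab : a ≤ b)
    (hc : b ≤ n + 1)
    (IH : ∀ t, meas n t < meas n ({1, 1, a, b} + s) → pr n t ∈ T n) :
    pr n ({1, 1, a, b} + s) ∈ T n := by
  have key : ∀ o p q : ℕ, o ≤ 1 → p ≤ n + 3 → q ≤ n + 3 →
      (2 + (a : ℤ) ^ 2 + b ^ 2 < 2 * o ^ 2 + p ^ 2 + q ^ 2) →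
      x n o ^ 2 * x n p * x n q * pr n s ∈ T n := by
    intro o p q ho hp hq h
    have := IH ({o, o, p, q} + s) (by
      rw [meas_add, meas_add]
      apply Nat.add_lt_add_right
      zify
      simp only [meas, Multiset.insert_eq_cons, Multiset.map_cons, Multiset.map_singleton,
        Multiset.sum_cons, Multiset.sum_singleton, Nat.cast_add]
      rw [meas_cast hp, meas_cast hq, meas_cast (by omega), meas_cast (by omega), meas_cast (by omega),
        meas_cast (by omega)]
      push_cast
      linarith)
    rw [pr_add] at this
    simpa [pr, mul_assoc, pow_two] using this
  have hm := Ideal.mul_mem_left _ (pr n s)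
    (minor2 (n := n) (j := a) (k := b + 1) (by omega) (by omega) (by omega))
  have hm := T_I hm
  have e : pr n ({1, 1, a, b} + s) = (2 * (a:ℂ) - 1)⁻¹ • ((2 * (a:ℂ) - 1) • pr n ({1, 1, a, b} + s)) := by
    rw [smul_smul, inv_mul_cancel₀ (odd_ne a), one_smul]
  rw [e]
  apply Submodule.smul_mem
  zify at ha hab hc
  have hb0 : ((a - 1 : ℕ) : ℤ) = a - 1 := by omega
  have h1 := key 0 a (b+2) (by omega) (by omega) (by omega) (by push_cast; nlinarith)
  have h2 := key 0 (a+1) (b+1) (by omega) (by omega) (by omega) (by push_cast; nlinarith)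
  have h3 := key 1 (a-1) (b+1) (by omega) (by omega) (by omega) (by push_cast [hb0]; nlinarith)
  have h1 := (T n).smul_mem (2 * (a:ℂ) - 1) h1
  have h2 := (T n).smul_mem (2 * ((b+1:ℕ):ℂ) - 1) h2
  have h3 := (T n).smul_mem (2 * ((b+1:ℕ):ℂ) - 1) h3
  have := (T n).sub_mem (T n |>.add_mem (T n |>.sub_mem h1 h2) h3) hm
  convert this using 1
  rw [pr_add, Matrix.det_fin_three]
  simp only [pr, Multiset.insert_eq_cons, Multiset.map_cons, Multiset.map_singleton,
        Multiset.prod_cons, Multiset.prod_singleton, MvPolynomial.smul_eq_C_mul]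
  simp
  ring

lemma pr_other {n : ℕ} (s : Multiset ℕ) (h : ∀ i ∈ s, i = 0 ∨ i = n + 2 ∨ i = n + 3) :
    ∃ g : A, emb n g = pr n s := by
  induction s using Multiset.induction_on with
  | empty => exact ⟨1, by simp [pr]⟩
  | cons a s ih =>
    obtain ⟨g, hg⟩ := ih fun i hi => h i (Multiset.mem_cons_of_mem hi)
    have key : ∃ k : Fin 3, emb n (X k) = x n a := by
      rcases h a (Multiset.mem_cons_self a s) with rfl | rfl | rfl
      · exact ⟨0, by simp [emb]⟩
      · exact ⟨1, by simp [emb]⟩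
      · exact ⟨2, by simp [emb]⟩
    obtain ⟨k, hk⟩ := key
    exact ⟨X k * g, by rw [map_mul, hg, hk]; simp [pr]⟩

lemma pr_T (n : ℕ) (s : Multiset ℕ) : pr n s ∈ T n := by
  induction hN : meas n s using Nat.strong_induction_on generalizing s with
  | _ N IH0 =>
  have IH : ∀ t, meas n t < meas n s → pr n t ∈ T n := fun t ht => IH0 _ (hN ▸ ht) t rfl
  clear IH0
  by_cases hbig : ∃ i ∈ s, n + 3 < i
  · obtain ⟨i, hi, hi'⟩ := hbig
    rw [pr_zero hi hi']; exact Submodule.zero_mem _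
  push Not at hbig
  obtain ⟨l, e, o, rfl, hsort, hl, ho⟩ : ∃ (l : List ℕ) (e : ℕ) (o : Multiset ℕ),
      s = (l : Multiset ℕ) + (Multiset.replicate e 1 + o) ∧ l.Pairwise (· ≤ ·) ∧
      (∀ i ∈ l, 2 ≤ i ∧ i ≤ n + 1) ∧ (∀ i ∈ o, i = 0 ∨ i = n + 2 ∨ i = n + 3) := by
    refine ⟨(s.filter (fun i => 2 ≤ i ∧ i ≤ n + 1)).sort (· ≤ ·),
      (s.filter (fun i => ¬ (2 ≤ i ∧ i ≤ n + 1))).count 1,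
      (s.filter (fun i => ¬ (2 ≤ i ∧ i ≤ n + 1))).filter (fun i => ¬ (i = 1)), ?_,
      Multiset.pairwise_sort _ _, ?_, ?_⟩
    rotate_left 1
    · intro i hi
      rw [Multiset.mem_sort, Multiset.mem_filter] at hi
      exact hi.2
    · intro i hi
      rw [Multiset.mem_filter, Multiset.mem_filter] at hi
      have := hbig i hi.1.1
      omega
    · rw [Multiset.sort_eq, ← Multiset.filter_eq', Multiset.filter_add_not, Multiset.filter_add_not]
  obtain ⟨g, hg⟩ := pr_other o ho
  have hsplit : pr n ((l : Multiset ℕ) + (Multiset.replicate e 1 + o)) =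
      emb n g * ((l.map (x n)).prod * x n 1 ^ e) := by
    rw [pr_add, pr_add, hg]; simp [pr]; ring
  have R3 : ∀ a b c t, (l : Multiset ℕ) + (Multiset.replicate e 1 + o) = {a, b, c} + t →
      2 ≤ a → a ≤ b → b ≤ c → c ≤ n + 1 →
      pr n ((l : Multiset ℕ) + (Multiset.replicate e 1 + o)) ∈ T n := by
    intro a b c t h ha hab hbc hc
    rw [h] at IH ⊢
    exact red3 t ha hab hbc hc IH
  have R2 : ∀ a b t, (l : Multiset ℕ) + (Multiset.replicate e 1 + o) = {1, 1, a, b} + t →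
      1 ≤ a → a ≤ b → b ≤ n + 1 →
      pr n ((l : Multiset ℕ) + (Multiset.replicate e 1 + o)) ∈ T n := by
    intro a b t h ha hab hbc
    rw [h] at IH ⊢
    exact red2 t ha hab hbc IH
  rcases l with _ | ⟨a, _ | ⟨b, _ | ⟨c, l⟩⟩⟩
  · rcases e with _ | _ | _ | _ | e
    · rw [hsplit]; apply T_mul
      simpa [u] using T_u (n := n) (i := 0) (j := 0) (by omega) (by omega)
    · rw [hsplit]; apply T_mul
      simpa [u] using T_u1 (n := n) (i := 0) (j := 0) (by omega) (by omega)
    · rw [hsplit]; apply T_mul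
      simpa [u'] using T_u' (n := n) (j := 0) (by omega)
    · rw [hsplit]; apply T_mul
      have := T_u' (n := n) (j := 1) (by omega)
      simp only [u', one_ne_zero, if_false] at this
      convert this using 1
      simp; ring
    · refine R2 1 1 (Multiset.replicate e 1 + o) ?_ (by omega) (by omega) (by omega)
      ext i
      simp [Multiset.replicate_succ, Multiset.count_cons, Multiset.count_singleton]
  · have ha := hl a (by simp)
    rcases e with _ | _ | _ | e
    · rw [hsplit]; apply T_mul
      simpa [u, show a - 1 ≠ 0 by omega, show a - 1 + 1 = a by omega] using
        T_u (n := n) (i := 0) (j := a - 1) (by omega) (by omega)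
    · rw [hsplit]; apply T_mul
      simpa [u, show a - 1 ≠ 0 by omega, show a - 1 + 1 = a by omega] using
        T_u1 (n := n) (i := 0) (j := a - 1) (by omega) (by omega)
    · rw [hsplit]; apply T_mul
      simpa [u', show a ≠ 0 by omega, mul_comm] using T_u' (n := n) (j := a) (by omega)
    · refine R2 1 a (Multiset.replicate e 1 + o) ?_ (by omega) (by omega) (by omega)
      ext i
      simp [Multiset.replicate_succ, Multiset.count_cons, Multiset.count_singleton,
        ← Multiset.cons_coe]
  · have ha := hl a (by simp)
    have hb := hl b (by simp)
    have hab : a ≤ b := by simp at hsort; omega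
    rcases e with _ | _ | e
    · rw [hsplit]; apply T_mul
      simpa [u, show a - 1 ≠ 0 by omega, show a - 1 + 1 = a by omega,
        show b - 1 ≠ 0 by omega, show b - 1 + 1 = b by omega] using
        T_u (n := n) (i := a - 1) (j := b - 1) (by omega) (by omega)
    · rw [hsplit]; apply T_mul
      simpa [u, show a - 1 ≠ 0 by omega, show a - 1 + 1 = a by omega,
        show b - 1 ≠ 0 by omega, show b - 1 + 1 = b by omega] using
        T_u1 (n := n) (i := a - 1) (j := b - 1) (by omega) (by omega)
    · refine R2 a b (Multiset.replicate e 1 + o) ?_ (by omega) (by omega) (by omega)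
      ext i
      simp [Multiset.replicate_succ, Multiset.count_cons, Multiset.count_singleton,
        ← Multiset.cons_coe]
  · have ha := hl a (by simp)
    have hb := hl b (by simp)
    have hc := hl c (by simp)
    simp only [List.pairwise_cons] at hsort
    refine R3 a b c ((l : Multiset ℕ) + (Multiset.replicate e 1 + o)) ?_ (by omega)
      (hsort.1 b (by simp)) (hsort.2.1 c (by simp)) (by omega)
    ext i
    simp only [← Multiset.cons_coe, Multiset.count_add, Multiset.count_cons,
      Multiset.insert_eq_cons, Multiset.count_singleton]
    ring

lemma T_top (n : ℕ) (F : S n) : F ∈ T n := by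
  have h : F ∈ Submodule.span ℂ (Set.range (pr n)) := by
    induction F using MvPolynomial.induction_on with
    | C r =>
      have : (C r : S n) = r • pr n 0 := by simp [pr, MvPolynomial.smul_eq_C_mul]
      rw [this]
      exact Submodule.smul_mem _ _ (Submodule.subset_span ⟨0, rfl⟩)
    | add p q hp hq => exact Submodule.add_mem _ hp hq
    | mul_X p i hp =>
      induction hp using Submodule.span_induction with
      | mem y hy =>
        obtain ⟨s, rfl⟩ := hy
        apply Submodule.subset_span
        refine ⟨i.val ::ₘ s, ?_⟩
        simp only [pr, Multiset.map_cons, Multiset.prod_cons]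
        rw [mul_comm]
        congr 1
        exact dif_pos i.isLt
      | zero => simp
      | add y z _ _ hy hz => rw [add_mul]; exact Submodule.add_mem _ hy hz
      | smul r y _ hy => rw [smul_mul_assoc]; exact Submodule.smul_mem _ _ hy
  refine (Submodule.span_le.2 ?_) h
  rintro _ ⟨s, rfl⟩
  exact pr_T n s

/-- The dehomogenised moment polynomials. -/
def q : ℕ → Polynomial ℂ
  | 0 => 1
  | 1 => 1
  | (j + 2) => Polynomial.C (2 * ((j + 1 : ℕ) : ℂ) - 1) * Polynomial.X * q (j + 1) + q j

lemma q_rec (j : ℕ) : q (j + 2) =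
    Polynomial.C (2 * ((j + 1 : ℕ) : ℂ) - 1) * Polynomial.X * q (j + 1) + q j := by
  rw [q]

lemma q_coprime (j : ℕ) : IsCoprime (q j) (q (j + 1)) := by
  induction j with
  | zero => simpa [q] using isCoprime_one_left
  | succ j ih =>
    obtain ⟨v, w, h⟩ := ih
    refine ⟨w - v * (Polynomial.C (2 * ((j + 1 : ℕ) : ℂ) - 1) * Polynomial.X), v, ?_⟩
    rw [← h, q_rec]
    ring

lemma q_deg (j : ℕ) : (q (j + 1)).natDegree = j ∧ (q j).natDegree ≤ j := by
  induction j with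
  | zero => simp [q]
  | succ j ih =>
    refine ⟨?_, by rw [ih.1]; omega⟩
    have h0 : q (j + 1) ≠ 0 := by
      intro h
      have h4 := ih.1
      rw [h, Polynomial.natDegree_zero] at h4
      subst h4
      simp [q] at h
    have h1 : (Polynomial.C (2 * ((j + 1 : ℕ) : ℂ) - 1) * Polynomial.X * q (j + 1)).natDegree
        = j + 1 := by
      rw [mul_assoc, Polynomial.natDegree_C_mul (odd_ne _), mul_comm,
        Polynomial.natDegree_mul_X h0, ih.1]
    rw [q_rec, Polynomial.natDegree_add_eq_left_of_natDegree_lt, h1]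
    rw [h1]
    exact Nat.lt_succ_of_le ih.2

/-- The parametrisation as a ring map. -/
def phi (n : ℕ) : S n →ₐ[ℂ] A :=
  aeval fun j => X 0 * X 1 ^ j.val * Polynomial.aeval (X 2 : A) (q j.val)

def pt (n : ℕ) (a s t : ℂ) : Fin (n + 3 + 1) → ℂ := fun j => a * s ^ j.val * (q j.val).eval t

lemma eval_phi (n : ℕ) (a s t : ℂ) (F : S n) :
    eval ![a, s, t] (phi n F) = eval (pt n a s t) F := by
  have : ((aeval (R := ℂ) ![a, s, t]).comp (phi n)) = aeval (R := ℂ) (pt n a s t) := by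
    ext j
    have h : aeval (R := ℂ) ![a, s, t] (Polynomial.aeval (X 2 : A) (q j.val))
        = (q j.val).eval t := by
      rw [← Polynomial.aeval_algHom_apply]
      simp [Polynomial.aeval_def, Polynomial.eval₂_eq_eval_map]
    rw [AlgHom.comp_apply, phi, aeval_X, map_mul, h, aeval_X]
    simp [pt]
  have := DFunLike.congr_fun this F
  simpa [MvPolynomial.coe_aeval_eq_eval] using this

lemma I_le_ker (n : ℕ) : invGaussIdeal (n + 3) ≤ RingHom.ker (phi n) := by
  rw [invGaussIdeal, Ideal.span_le]
  rintro p ⟨s, -, rfl⟩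
  rw [SetLike.mem_coe, RingHom.mem_ker, AlgHom.map_det]
  rw [← Matrix.exists_vecMul_eq_zero_iff]
  refine ⟨![X 1 ^ 2, X 1 * X 2, -1], ?_, ?_⟩
  · intro h
    have := congrFun h 2
    simp at this
  · ext1 c
    simp only [Matrix.vecMul, dotProduct, Fin.sum_univ_three, AlgHom.mapMatrix_apply,
      Matrix.map_apply, Matrix.submatrix_apply, id, invGaussMatrix, Matrix.of_apply]
    split_ifs with h
    · simp [phi, q]; ring
    · obtain ⟨j, hj⟩ : ∃ j, (s c).val = j + 1 := ⟨(s c).val - 1, by omega⟩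
      have hC : Polynomial.aeval (X 2 : A) (Polynomial.C (2 * ((j + 1 : ℕ) : ℂ) - 1))
          = C (2 * ((j + 1 : ℕ) : ℂ) - 1) := Polynomial.aeval_C _ _
      have hC' : phi n (C (2 * ((j + 1 : ℕ) : ℂ) - 1)) = C (2 * ((j + 1 : ℕ) : ℂ) - 1) :=
        (phi n).commutes _
      have hX : ∀ k, phi n (X k) = X 0 * X 1 ^ k.val * Polynomial.aeval (X 2 : A) (q k.val) :=
        fun k => by rw [phi, aeval_X]
      simp only [hj, Matrix.cons_val_zero, Matrix.cons_val_one, Matrix.cons_val, map_mul, hC', hX,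
        q_rec, map_add, hC, Polynomial.aeval_X, Nat.add_sub_cancel, Pi.zero_apply]
      ring

lemma many_roots (n : ℕ) : ∃ bad : Finset ℂ, ∀ c, c ∉ bad →
    (q (n + 3) ^ (n + 2) - Polynomial.C c * q (n + 2) ^ (n + 3)).roots.toFinset.card
      = (n + 2) * (n + 2) := by
  classical
  set P := q (n + 3) ^ (n + 2) with hP
  set Q := q (n + 2) ^ (n + 3) with hQ
  have hcop : IsCoprime P Q := (q_coprime (n + 2)).symm.pow
  have hdP : P.natDegree = (n + 2) * (n + 2) := by
    rw [hP, Polynomial.natDegree_pow, (q_deg (n + 2)).1]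
  have hdQ : Q.natDegree < (n + 2) * (n + 2) := by
    rw [hQ, Polynomial.natDegree_pow, (q_deg (n + 1)).1]
    nlinarith
  set W := Polynomial.derivative P * Q - P * Polynomial.derivative Q with hW
  have hW0 : W ≠ 0 := by
    intro h
    have h1 : P ∣ Polynomial.derivative P * Q := ⟨Polynomial.derivative Q, sub_eq_zero.1 h⟩
    have h2 : P ∣ Polynomial.derivative P := hcop.dvd_of_dvd_mul_right h1
    have h3 : Polynomial.derivative P = 0 := by
      by_contra h0
      have := Polynomial.natDegree_le_of_dvd h2 h0
      have h4 := Polynomial.natDegree_derivative_lt (p := P) (by rw [hdP]; positivity)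
      omega
    have := Polynomial.natDegree_eq_zero_of_derivative_eq_zero h3
    rw [hdP] at this
    simp at this
  refine ⟨W.roots.toFinset.image fun t => P.eval t / Q.eval t, fun c hc => ?_⟩
  set F := P - Polynomial.C c * Q with hF
  have hdF : F.natDegree = (n + 2) * (n + 2) := by
    rw [hF, Polynomial.natDegree_sub_eq_left_of_natDegree_lt, hdP]
    rw [hdP]
    exact lt_of_le_of_lt (Polynomial.natDegree_C_mul_le _ _) hdQ
  have hF0 : F ≠ 0 := by
    intro h; rw [h] at hdF; simp at hdF
  have hnodup : F.roots.Nodup := by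
    rw [Multiset.nodup_iff_count_le_one]
    intro t
    rw [Polynomial.count_roots]
    by_contra hlt
    push Not at hlt
    rw [Polynomial.one_lt_rootMultiplicity_iff_isRoot hF0] at hlt
    obtain ⟨h1, h2⟩ := hlt
    apply hc
    simp only [hF, Polynomial.IsRoot, Polynomial.eval_sub, Polynomial.eval_mul, Polynomial.eval_C,
      Polynomial.derivative_sub, Polynomial.derivative_mul, Polynomial.derivative_C, zero_mul,
      zero_add] at h1 h2
    have hQt : Q.eval t ≠ 0 := by
      intro h0
      obtain ⟨v, w, hvw⟩ := hcop
      have := congrArg (Polynomial.eval t) hvw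
      have hPt : P.eval t = 0 := by rw [h0] at h1; simpa using h1
      simp [h0, hPt] at this
    rw [Finset.mem_image]
    refine ⟨t, ?_, ?_⟩
    · rw [Multiset.mem_toFinset, Polynomial.mem_roots hW0]
      simp only [hW, Polynomial.IsRoot, Polynomial.eval_sub, Polynomial.eval_mul]
      linear_combination (Q.eval t) * h2 - (Polynomial.derivative Q).eval t * h1
    · rw [div_eq_iff hQt]; linear_combination h1
  rw [Multiset.toFinset_card_of_nodup hnodup, ← hdF]
  exact (IsAlgClosed.splits F).natDegree_eq_card_roots.symm

lemma eval_I {n : ℕ} {F : S n} (hF : F ∈ invGaussIdeal (n + 3)) (a s t : ℂ) :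
    eval (pt n a s t) F = 0 := by
  have := I_le_ker n hF
  rw [RingHom.mem_ker] at this
  rw [← eval_phi]
  change eval _ ((phi n) F) = 0
  rw [show phi n F = 0 from this, map_zero]

lemma eval_x {n j : ℕ} (hj : j ≤ n + 3) (a s t : ℂ) :
    eval (pt n a s t) (x n j) = a * s ^ j * (q j).eval t := by
  rw [x, dif_pos (by omega), eval_X, pt]

lemma eval_emb {n : ℕ} (g : A) (v : Fin (n + 3 + 1) → ℂ) :
    eval v (emb n g) = eval ![eval v (x n 0), eval v (x n (n + 2)), eval v (x n (n + 3))] g := by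
  have : (aeval (R := ℂ) v).comp (emb n) =
      aeval (R := ℂ) ![eval v (x n 0), eval v (x n (n + 2)), eval v (x n (n + 3))] := by
    ext j
    fin_cases j <;> simp [emb, MvPolynomial.coe_aeval_eq_eval]
  have := DFunLike.congr_fun this g
  simpa [MvPolynomial.coe_aeval_eq_eval] using this

lemma coeff_zero {n : ℕ} (c : Fin (n + 2) × Fin (n + 2) → A)
    (hc : ∀ a s t, eval (pt n a s t) (∑ p, emb n (c p) * b n p) = 0)
    {a α β : ℂ} (ha : a ≠ 0) (hα : α ≠ 0) (hβ : β ≠ 0)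
    (hr : (q (n + 3) ^ (n + 2) - Polynomial.C (a * β ^ (n + 2) / α ^ (n + 3)) *
      q (n + 2) ^ (n + 3)).roots.toFinset.card = (n + 2) * (n + 2)) (p) :
    eval ![a, α, β] (c p) = 0 := by
  classical
  set γ := a * β ^ (n + 2) / α ^ (n + 3) with hγ
  have hγ0 : γ ≠ 0 := by positivity
  set Z := (q (n + 3) ^ (n + 2) - Polynomial.C γ * q (n + 2) ^ (n + 3)).roots.toFinset with hZ
  have hroot : ∀ t ∈ Z, (q (n + 3)).eval t ^ (n + 2) = γ * (q (n + 2)).eval t ^ (n + 3) := by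
    intro t ht
    rw [hZ, Multiset.mem_toFinset] at ht
    have := Polynomial.isRoot_of_mem_roots ht
    simp only [Polynomial.IsRoot, Polynomial.eval_sub, Polynomial.eval_mul, Polynomial.eval_C,
      Polynomial.eval_pow] at this
    linear_combination this
  have hne : ∀ t ∈ Z, (q (n + 3)).eval t ≠ 0 ∧ (q (n + 2)).eval t ≠ 0 := by
    intro t ht
    have h := hroot t ht
    have key : ¬ ((q (n + 3)).eval t = 0 ∧ (q (n + 2)).eval t = 0) := by
      rintro ⟨h1, h2⟩
      obtain ⟨v, w, hvw⟩ := q_coprime (n + 2)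
      have := congrArg (Polynomial.eval t) hvw
      simp [h1, h2] at this
    constructor
    · intro h0
      refine key ⟨h0, ?_⟩
      rw [h0, zero_pow (by omega)] at h
      have := (mul_eq_zero.1 h.symm).resolve_left hγ0
      exact pow_eq_zero_iff (by omega) |>.1 this
    · intro h0
      refine key ⟨?_, h0⟩
      rw [h0, zero_pow (by omega), mul_zero] at h
      exact pow_eq_zero_iff (by omega) |>.1 h
  set σ : ℂ → ℂ := fun t => β * (q (n + 2)).eval t / (α * (q (n + 3)).eval t) with hσ
  have hσ0 : ∀ t ∈ Z, σ t ≠ 0 := fun t ht => by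
    have := hne t ht
    exact div_ne_zero (mul_ne_zero hβ this.2) (mul_ne_zero hα this.1)
  have hA : ∀ t ∈ Z, a * σ t ^ (n + 2) * (q (n + 2)).eval t = α := by
    intro t ht
    obtain ⟨h1, h2⟩ := hne t ht
    have h := hroot t ht
    simp only [hσ]
    rw [div_pow, mul_pow, mul_pow, h, hγ]
    field_simp
    ring
  have hB : ∀ t ∈ Z, a * σ t ^ (n + 3) * (q (n + 3)).eval t = β := by
    intro t ht
    obtain ⟨h1, h2⟩ := hne t ht
    have h := hA t ht
    have h3 : σ t * (q (n + 3)).eval t * α = β * (q (n + 2)).eval t := by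
      simp only [hσ]; field_simp
    apply mul_right_cancel₀ hα
    rw [pow_succ]
    calc a * (σ t ^ (n + 2) * σ t) * (q (n + 3)).eval t * α
        = a * σ t ^ (n + 2) * (σ t * (q (n + 3)).eval t * α) := by ring
      _ = (a * σ t ^ (n + 2) * (q (n + 2)).eval t) * β := by rw [h3]; ring
      _ = β * α := by rw [h]; ring
  have hemb : ∀ t ∈ Z, ∀ g : A, eval (pt n a (σ t) t) (emb n g) = eval ![a, α, β] g := by
    intro t ht g
    rw [eval_emb, eval_x (by omega), eval_x (by omega), eval_x (by omega), hA t ht, hB t ht]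
    simp [q]
  let L : (Fin (n + 2) × Fin (n + 2) → ℂ) →ₗ[ℂ] (Z → ℂ) :=
    { toFun := fun v t => ∑ p, v p * eval (pt n a (σ t) t) (b n p)
      map_add' := by
        intro v w; ext t; simp [add_mul, Finset.sum_add_distrib]
      map_smul' := by
        intro r v; ext t; simp [Finset.mul_sum, mul_assoc] }
  have hsurj : Function.Surjective L := by
    have hS : ∀ G : S n, (fun t : Z => eval (pt n a (σ t) t) G) ∈ LinearMap.range L := by
      intro G
      obtain ⟨e, he⟩ := T_top n G
      refine ⟨fun p => eval ![a, α, β] (e p), ?_⟩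
      ext t
      have := eval_I he a (σ t) t
      rw [map_sub, map_sum, sub_eq_zero] at this
      rw [this]
      simp only [map_mul, hemb t t.2]
      rfl
    intro f
    let G : Z → S n := fun t0 => ∏ t ∈ Z.erase t0, (C a * x n 2 - C (t + 1) * x n 1 ^ 2)
    have hG : ∀ t0 t : Z, eval (pt n a (σ t) t) (G t0) =
        ∏ t' ∈ Z.erase t0, (a ^ 2 * σ t ^ 2 * ((t : ℂ) - t')) := by
      intro t0 t
      simp only [G, map_prod]
      refine Finset.prod_congr rfl fun t' _ => ?_
      simp only [map_sub, map_mul, map_pow, eval_C]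
      rw [eval_x (by omega), eval_x (by omega)]
      simp [q]
      norm_num
      ring
    have hf : f = fun t : Z => eval (pt n a (σ t) t)
        (∑ t0 : Z, C (f t0 / eval (pt n a (σ t0) t0) (G t0)) * G t0) := by
      ext t
      rw [map_sum, Finset.sum_eq_single t]
      · rw [map_mul, eval_C, div_mul_cancel₀]
        rw [hG, Finset.prod_ne_zero_iff]
        intro t' ht'
        have h1 := hσ0 t t.2
        have h2 : (t : ℂ) - t' ≠ 0 := sub_ne_zero.2 (Finset.ne_of_mem_erase ht').symm
        positivity
      · intro t0 _ h
        rw [map_mul, hG t0 t, Finset.prod_eq_zero (i := (t : ℂ)), mul_zero]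
        · exact Finset.mem_erase.2 ⟨fun h' => h (Subtype.ext h'.symm), t.2⟩
        · simp
      · simp
    rw [hf]
    exact hS _
  have hinj : Function.Injective L :=
    (LinearMap.injective_iff_surjective_of_finrank_eq_finrank (by simp [hr])).2 hsurj
  have h0 : L (fun p => eval ![a, α, β] (c p)) = 0 := by
    ext t
    have := hc a (σ t) t
    rw [map_sum] at this
    simp only [map_mul, hemb t t.2] at this
    exact this
  exact congrFun (hinj (h0.trans (map_zero L).symm)) p

lemma ker_le_I (n : ℕ) : RingHom.ker (phi n) ≤ invGaussIdeal (n + 3) := by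
  intro F hF
  obtain ⟨c, hc⟩ := T_top n F
  have hF0 : phi n F = 0 := hF
  have hz : ∀ a s t, eval (pt n a s t) (∑ p, emb n (c p) * b n p) = 0 := by
    intro a s t
    have := eval_I hc a s t
    rw [map_sub, ← eval_phi, hF0, map_zero, zero_sub, neg_eq_zero] at this
    exact this
  obtain ⟨bad, hbad⟩ := many_roots n
  have hc0 : ∀ p, c p = 0 := by
    intro p
    let D : A := X 0 * X 1 * X 2 * ∏ r ∈ bad, (X 0 * X 2 ^ (n + 2) - C r * X 1 ^ (n + 3))
    have hD : D ≠ 0 := by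
      refine mul_ne_zero (mul_ne_zero (mul_ne_zero (X_ne_zero _) (X_ne_zero _)) (X_ne_zero _)) ?_
      rw [Finset.prod_ne_zero_iff]
      intro r _ h
      have := congrArg (eval ![r + 1, 1, 1]) h
      simp at this
    have hmul : c p * D = 0 := by
      apply MvPolynomial.funext
      intro v
      rw [map_zero, map_mul]
      by_cases hv : eval v D = 0
      · rw [hv, mul_zero]
      · simp only [D, map_mul, eval_X, map_prod, map_sub, map_pow, eval_C, mul_ne_zero_iff,
          ne_eq, ← ne_eq, Finset.prod_ne_zero_iff] at hv
        obtain ⟨⟨⟨h0, h1⟩, h2⟩, h3⟩ := hv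
        have := coeff_zero c hz h0 h1 h2 (hbad _ (fun hmem => h3 _ hmem (by field_simp; ring))) p
        have hv' : ![v 0, v 1, v 2] = v := by ext i; fin_cases i <;> rfl
        rw [hv'] at this
        rw [this, zero_mul]
    exact (mul_eq_zero.1 hmul).resolve_right hD
  simpa [hc0] using hc

end

end InvGauss

/-- For every `d ≥ 3`, the ideal `I₃(H)` of the inverse Gaussian moment variety is prime. -/
theorem invGaussIdeal_isPrime (d : ℕ) (hd : 3 ≤ d) : (invGaussIdeal d).IsPrime := by
  obtain ⟨n, rfl⟩ : ∃ n, d = n + 3 := ⟨d - 3, by omega⟩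
  rw [le_antisymm (InvGauss.I_le_ker n) (InvGauss.ker_le_I n)]
  exact RingHom.ker_isPrime _
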